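/- Let C ⊆ ℝ^d be a nonempty open convex set. Let φ : ℝ^d → ℝ ∪ {+∞} be proper, lower semicontinuous and convex with int(dom φ) = C, differentiable and strictly convex on C, supercoercive (φ(x)/‖x‖ → ∞ as ‖x‖ → ∞), and essentially smooth (‖∇φ(x_k)‖ → ∞ whenever x_k ∈ C converges to a boundary point of dom φ). Let R : ℝ^d → ℝ ∪ {+∞} be proper, lower semicontinuous and convex with dom R ∩ C ≠ ∅. Then for every x ∈ C and every α > 0, the minimization problem min over u ∈ closure(C) of αR(u) + D_φ(u, x) has exactly one solution, and this solution belongs to C. -/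

import Mathlib

open scoped RealInnerProductSpace
open Filter

/-!
The objective is `φ + g` with `g` the sum of `αR` and an affine function, so `g` is closed and
convex and dominates some `a - b‖·‖`. Supercoercivity of `φ` therefore makes the sublevel sets of
`φ + g` bounded; being closed and convex as well, they are weakly compact in a Hilbert space, and a
minimizer `u` exists.

Suppose that `u` lies on the boundary of `dom φ`, and let `z` be a point of `C ∩ dom R`, with
`φ ≤ M` on the ball of radius `r` around `z`. At a point `y` of the segment from `z` to `u`,
minimality of `u` bounds the slope of `φ` in the direction `z - u` from below, and the gradient
inequality on the ball turns this into `r ‖∇φ(y)‖ ≤ M + g(z) - (φ(u) + g(u))`. This bound does not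
depend on `y`, whereas the gradient blows up as `y → u`. So every minimizer lies in `C`, where `φ`
is strictly convex, and there is only one.
-/

section WeakTopology

theorem inclusionInDoubleDualWeak_surjective {𝕜 E : Type*} [RCLike 𝕜] [NormedAddCommGroup E]
    [InnerProductSpace 𝕜 E] [CompleteSpace E] :
    Function.Surjective (NormedSpace.inclusionInDoubleDualWeak 𝕜 E) := by
  intro ξ
  let dual := InnerProductSpace.toDual 𝕜 E
  let x : E := dual.symm ((starL 𝕜 : 𝕜 ≃L⋆[𝕜] 𝕜).toContinuousLinearMap.comp
    ((WeakDual.toStrongDual ξ).comp dual.toContinuousLinearEquiv.toContinuousLinearMap))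
  refine ⟨toWeakSpace 𝕜 E x, DFunLike.ext _ _ fun l => ?_⟩
  obtain ⟨y, rfl⟩ := dual.surjective l
  have hx : inner 𝕜 x y = star (ξ (dual y)) := InnerProductSpace.toDual_symm_apply
  change inner 𝕜 y x = ξ (dual y)
  rw [← inner_conj_symm, hx, starRingEnd_apply, star_star]

theorem isClosed_toWeakSpace_image {E : Type*} [AddCommGroup E] [Module ℝ E] [TopologicalSpace E]
    [IsTopologicalAddGroup E] [ContinuousSMul ℝ E] [LocallyConvexSpace ℝ E] {s : Set E}
    (hs : IsClosed s) (hs_conv : Convex ℝ s) : IsClosed (toWeakSpace ℝ E '' s) := by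
  rw [← hs.closure_eq, hs_conv.toWeakSpace_closure ℝ]
  exact isClosed_closure

theorem isCompact_toWeakSpace_image {E : Type*} [NormedAddCommGroup E] [InnerProductSpace ℝ E]
    [CompleteSpace E] {s : Set E} (hs : IsClosed s) (hs_conv : Convex ℝ s)
    (hs_bdd : Bornology.IsBounded s) : IsCompact (toWeakSpace ℝ E '' s) := by
  rw [← (isClosed_toWeakSpace_image hs hs_conv).closure_eq]
  refine NormedSpace.isCompact_closure_of_isBounded ℝ E _ ?_ ?_
  · rwa [Set.preimage_image_eq _ (toWeakSpace ℝ E).injective]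
  · rw [inclusionInDoubleDualWeak_surjective.range_eq]
    exact Set.subset_univ _

theorem lowerSemicontinuous_comp_toWeakSpace_symm {E β : Type*} [AddCommGroup E] [Module ℝ E]
    [TopologicalSpace E] [IsTopologicalAddGroup E] [ContinuousSMul ℝ E] [LocallyConvexSpace ℝ E]
    [LinearOrder β] {f : E → β} (hf : LowerSemicontinuous f)
    (hf_conv : QuasiconvexOn ℝ Set.univ f) :
    LowerSemicontinuous (f ∘ (toWeakSpace ℝ E).symm) := by
  refine lowerSemicontinuous_iff_isClosed_preimage.2 fun c => ?_
  have hsub : Convex ℝ (f ⁻¹' Set.Iic c) := by simpa using! hf_conv c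
  simpa only [Set.preimage_comp, LinearEquiv.image_eq_preimage_symm] using
    isClosed_toWeakSpace_image (hf.isClosed_preimage c) hsub

theorem exists_forall_le_of_quasiconvexOn {E β : Type*} [NormedAddCommGroup E]
    [InnerProductSpace ℝ E] [CompleteSpace E] [LinearOrder β] {f : E → β}
    (hf : LowerSemicontinuous f) (hf_conv : QuasiconvexOn ℝ Set.univ f) (z : E)
    (hz : ∀ᶠ v in Bornology.cobounded E, f z < f v) : ∃ u, ∀ v, f u ≤ f v := by
  set s := f ⁻¹' Set.Iic (f z)
  have hs_conv : Convex ℝ s := by simpa using! hf_conv (f z)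
  have hs_bdd : Bornology.IsBounded s := by
    simpa [s, Bornology.isBounded_def, Set.compl_def] using! hz
  obtain ⟨_, ⟨u, hu, rfl⟩, hmin⟩ := LowerSemicontinuousOn.exists_isMinOn
    (Set.Nonempty.image _ ⟨z, le_refl (f z)⟩)
    (isCompact_toWeakSpace_image (hf.isClosed_preimage (f z)) hs_conv hs_bdd)
    ((lowerSemicontinuous_comp_toWeakSpace_symm hf hf_conv).lowerSemicontinuousOn _)
  refine ⟨u, fun v => ?_⟩
  rcases le_or_gt (f v) (f z) with hv | hv
  · simpa using hmin ⟨v, hv, rfl⟩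
  · exact le_trans hu hv.le

end WeakTopology

section ConvexFunctions

variable {E : Type*} [NormedAddCommGroup E] [InnerProductSpace ℝ E] [CompleteSpace E]

theorem convexOn_add_inner_gradient_le {s : Set E} {f : E → ℝ} {p y v : E} (hf : ConvexOn ℝ s f)
    (hp : HasGradientAt f p y) (hy : y ∈ s) (hv : v ∈ s) : f y + ⟪p, v - y⟫ ≤ f v := by
  have hslope := (hp.hasFDerivAt.hasLineDerivAt (v - y)).tendsto_slope_zero_right
  suffices ⟪p, v - y⟫ ≤ f v - f y by linarith
  refine le_of_tendsto (by simpa using! hslope) ?_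
  filter_upwards [Ioo_mem_nhdsGT zero_lt_one] with t ⟨ht₀, ht₁⟩
  have h := hf.2 hy hv (sub_nonneg.2 ht₁.le) ht₀.le (sub_add_cancel 1 t)
  rw [show (1 - t) • y + t • v = y + t • (v - y) by module] at h
  simp only [smul_eq_mul] at h ⊢
  rw [inv_mul_le_iff₀ ht₀]
  linarith

-- Test the gradient inequality at the point of the ball farthest in the direction of `p`.
theorem convexOn_add_inner_add_mul_norm_gradient_le {s : Set E} {f : E → ℝ} {p y z : E} {r M : ℝ}
    (hf : ConvexOn ℝ s f) (hp : HasGradientAt f p y) (hy : y ∈ s) (hr : 0 ≤ r)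
    (hball : Metric.closedBall z r ⊆ s) (hM : ∀ v ∈ Metric.closedBall z r, f v ≤ M) :
    f y + ⟪p, z - y⟫ + r * ‖p‖ ≤ M := by
  set v := z + (r / ‖p‖) • p
  have hv : v ∈ Metric.closedBall z r := by
    rw [Metric.mem_closedBall, dist_self_add_left, norm_smul, norm_div, norm_norm,
      Real.norm_of_nonneg hr, div_mul_eq_mul_div]
    exact div_le_of_le_mul₀ (norm_nonneg p) hr le_rfl
  have hinner : ⟪p, v - y⟫ = ⟪p, z - y⟫ + r * ‖p‖ := by
    rw [show v - y = (z - y) + (r / ‖p‖) • p by simp only [v]; module, inner_add_right,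
      real_inner_smul_right, real_inner_self_eq_norm_mul_norm, div_mul_eq_mul_div, mul_div_assoc,
      mul_self_div_self]
  calc f y + ⟪p, z - y⟫ + r * ‖p‖ = f y + ⟪p, v - y⟫ := by rw [hinner, add_assoc]
    _ ≤ f v := convexOn_add_inner_gradient_le hf hp hy (hball hv)
    _ ≤ M := hM v hv

theorem convexOn_mul_norm_gradient_le_of_add_le {s t : Set E} {f g : E → ℝ} {p u z : E}
    {r M τ : ℝ} (hf : ConvexOn ℝ s f) (hg : ConvexOn ℝ t g) (hus : u ∈ s) (hut : u ∈ t)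
    (hzt : z ∈ t) (hr : 0 ≤ r) (hball : Metric.closedBall z r ⊆ s)
    (hM : ∀ v ∈ Metric.closedBall z r, f v ≤ M) (hτ₀ : 0 < τ) (hτ₁ : τ ≤ 1)
    (hp : HasGradientAt f p (τ • z + (1 - τ) • u))
    (hle : f u + g u ≤ f (τ • z + (1 - τ) • u) + g (τ • z + (1 - τ) • u)) :
    r * ‖p‖ ≤ M + g z - (f u + g u) := by
  set y := τ • z + (1 - τ) • u with hy
  have hτ : 0 ≤ 1 - τ := sub_nonneg.2 hτ₁
  have hys : y ∈ s := hf.1 (hball (Metric.mem_closedBall_self hr)) hus hτ₀.le hτ (by ring)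
  have hgy : g y ≤ τ * g z + (1 - τ) * g u := hg.2 hzt hut hτ₀.le hτ (by ring)
  have hu : f y - τ * ⟪p, z - u⟫ ≤ f u := by
    have h := convexOn_add_inner_gradient_le hf hp hys hus
    rwa [show u - y = -(τ • (z - u)) by rw [hy]; module, inner_neg_right, real_inner_smul_right,
      ← sub_eq_add_neg] at h
  have hz : f y + (1 - τ) * ⟪p, z - u⟫ + r * ‖p‖ ≤ M := by
    have h := convexOn_add_inner_add_mul_norm_gradient_le hf hp hys hr hball hM
    rwa [show z - y = (1 - τ) • (z - u) by rw [hy]; module, real_inner_smul_right] at h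
  have hslope : g u - g z ≤ ⟪p, z - u⟫ := le_of_mul_le_mul_left (by linarith) hτ₀
  have := mul_le_mul_of_nonneg_left hslope hτ
  linarith

end ConvexFunctions

theorem convexOn_sub_mul_norm_sub_le {E : Type*} [SeminormedAddCommGroup E] [NormedSpace ℝ E]
    {s : Set E} {f : E → ℝ} {z u : E} {r ε : ℝ} (hf : ConvexOn ℝ s f) (hz : z ∈ s) (hr : 0 < r)
    (hε : 0 ≤ ε) (hball : ∀ v ∈ Metric.closedBall z r, v ∈ s → f z - ε ≤ f v) (hu : u ∈ s) :
    f z - ε - ε / r * ‖u - z‖ ≤ f u := by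
  rcases le_or_gt ‖u - z‖ r with hur | hur
  · have hnear := hball u (by rwa [Metric.mem_closedBall, dist_eq_norm]) hu
    have : 0 ≤ ε / r * ‖u - z‖ := by positivity
    linarith
  have hpos : 0 < ‖u - z‖ := hr.trans hur
  set q := r / ‖u - z‖ with hq
  have hq₀ : 0 < q := div_pos hr hpos
  have hq₁ : 0 ≤ 1 - q := sub_nonneg.2 ((div_le_one hpos).2 hur.le)
  have hsphere : q • u + (1 - q) • z ∈ Metric.closedBall z r := by
    rw [Metric.mem_closedBall, dist_eq_norm,
      show q • u + (1 - q) • z - z = q • (u - z) by module, norm_smul,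
      Real.norm_of_nonneg hq₀.le, div_mul_cancel₀ r hpos.ne']
  have hle : f z - ε ≤ q * f u + (1 - q) * f z :=
    (hball _ hsphere (hf.1 hu hz hq₀.le hq₁ (by ring))).trans
      (hf.2 hu hz hq₀.le hq₁ (by ring))
  have hεq : ε / r * ‖u - z‖ = ε / q := by rw [hq]; field_simp
  have hdiv : f z - f u ≤ ε / q := by
    rw [le_div_iff₀ hq₀]
    linarith
  linarith

/-- The effective domain `dom f` of an extended-real function, here `{f ≠ ⊤}`; values `⊥` are
excluded separately by `IsClosedConvex`. -/
def effDomain {E : Type*} (f : E → EReal) : Set E :=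
  {z | f z ≠ ⊤}

/-- Lower semicontinuous convex functions with values in `ℝ ∪ {+∞}`. The functions of this kind with
nonempty `effDomain` form the class usually written `Γ₀(E)`. -/
structure IsClosedConvex {E : Type*} [AddCommGroup E] [Module ℝ E] [TopologicalSpace E]
    (f : E → EReal) : Prop where
  ne_bot : ∀ z, f z ≠ ⊥
  lsc : LowerSemicontinuous f
  convex : ∀ u v : E, ∀ t : ℝ, 0 ≤ t → t ≤ 1 →
    f (t • u + (1 - t) • v) ≤ (t : EReal) * f u + ((1 - t : ℝ) : EReal) * f v

namespace IsClosedConvex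

section TopologicalSpace

variable {E : Type*} [AddCommGroup E] [Module ℝ E] [TopologicalSpace E] {f g : E → EReal}

theorem convexOn_toReal (hf : IsClosedConvex f) :
    ConvexOn ℝ (effDomain f) fun z => (f z).toReal := by
  have hle : ∀ u ∈ effDomain f, ∀ v ∈ effDomain f, ∀ a b : ℝ, 0 ≤ a → 0 ≤ b → a + b = 1 →
      f (a • u + b • v) ≤ ((a * (f u).toReal + b * (f v).toReal : ℝ) : EReal) := by
    intro u hu v hv a b ha hb hab
    obtain rfl : b = 1 - a := by linarith
    have h := hf.convex u v a ha (by linarith)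
    rw [← EReal.coe_toReal hu (hf.ne_bot u), ← EReal.coe_toReal hv (hf.ne_bot v)] at h
    exact_mod_cast h
  refine ⟨fun u hu v hv a b ha hb hab => ?_, fun u hu v hv a b ha hb hab => ?_⟩
  · exact ne_top_of_le_ne_top (EReal.coe_ne_top _) (hle u hu v hv a b ha hb hab)
  · exact EReal.toReal_le_toReal (hle u hu v hv a b ha hb hab) (hf.ne_bot _) (EReal.coe_ne_top _)

theorem quasiconvexOn (hf : IsClosedConvex f) : QuasiconvexOn ℝ Set.univ f := by
  refine convex_univ.quasiconvexOn_of_convex_le fun c u hu v hv a b ha hb hab => ?_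
  obtain rfl : b = 1 - a := by linarith
  have ha' : (0 : EReal) ≤ a := EReal.coe_nonneg.2 ha
  have hb' : (0 : EReal) ≤ (1 - a : ℝ) := EReal.coe_nonneg.2 hb
  calc f (a • u + (1 - a) • v) ≤ a * f u + (1 - a : ℝ) * f v := hf.convex u v a ha (by linarith)
    _ ≤ a * c + (1 - a : ℝ) * c :=
      add_le_add (mul_le_mul_of_nonneg_left hu ha') (mul_le_mul_of_nonneg_left hv hb')
    _ = c := by
      rw [← EReal.right_distrib_of_nonneg ha' hb', ← EReal.coe_add, add_sub_cancel,
        EReal.coe_one, one_mul]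

theorem add (hf : IsClosedConvex f) (hg : IsClosedConvex g) :
    IsClosedConvex fun z => f z + g z where
  ne_bot z := EReal.add_ne_bot_iff.2 ⟨hf.ne_bot z, hg.ne_bot z⟩
  lsc := hf.lsc.add' hg.lsc fun z =>
    EReal.continuousAt_add (.inr (hg.ne_bot z)) (.inl (hf.ne_bot z))
  convex u v t ht₀ ht₁ := by
    refine (add_le_add (hf.convex u v t ht₀ ht₁) (hg.convex u v t ht₀ ht₁)).trans_eq ?_
    rw [EReal.left_distrib_of_nonneg_of_ne_top (EReal.coe_nonneg.2 ht₀) (EReal.coe_ne_top t),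
      EReal.left_distrib_of_nonneg_of_ne_top (EReal.coe_nonneg.2 (sub_nonneg.2 ht₁))
        (EReal.coe_ne_top _), add_add_add_comm]

theorem effDomain_add (hf : IsClosedConvex f) (hg : IsClosedConvex g) :
    effDomain (fun z => f z + g z) = effDomain f ∩ effDomain g :=
  Set.ext fun z => EReal.add_ne_top_iff_ne_top₂ (hf.ne_bot z) (hg.ne_bot z)

theorem toReal_add (hf : IsClosedConvex f) (hg : IsClosedConvex g) {z : E}
    (hz : z ∈ effDomain f ∩ effDomain g) :
    (f z + g z).toReal = (f z).toReal + (g z).toReal :=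
  EReal.toReal_add hz.1 (hf.ne_bot z) hz.2 (hg.ne_bot z)

theorem toReal_le_toReal (hf : IsClosedConvex f) {u v : E} (hv : v ∈ effDomain f)
    (h : f u ≤ f v) : (f u).toReal ≤ (f v).toReal :=
  EReal.toReal_le_toReal h (hf.ne_bot u) hv

theorem coe_mul (hf : IsClosedConvex f) {a : ℝ} (ha : 0 ≤ a) :
    IsClosedConvex fun z => (a : EReal) * f z where
  ne_bot z := (EReal.mul_ne_bot _ _).2 (by simp [hf.ne_bot z, ha])
  lsc := by
    have hcont : Continuous fun y : EReal => (a : EReal) * y :=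
      continuous_iff_continuousAt.2 fun y =>
        EReal.Tendsto.const_mul tendsto_id (by simp) (by simp)
    exact hcont.comp_lowerSemicontinuous hf.lsc fun _ _ h =>
      mul_le_mul_of_nonneg_left h (EReal.coe_nonneg.2 ha)
  convex u v t ht₀ ht₁ := by
    refine (mul_le_mul_of_nonneg_left (hf.convex u v t ht₀ ht₁)
      (EReal.coe_nonneg.2 ha)).trans_eq ?_
    rw [EReal.left_distrib_of_nonneg_of_ne_top (EReal.coe_nonneg.2 ha) (EReal.coe_ne_top a),
      mul_left_comm, mul_left_comm (a : EReal)]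

end TopologicalSpace

theorem of_real {E : Type*} [AddCommGroup E] [Module ℝ E] [TopologicalSpace E] {h : E → ℝ}
    (hcont : Continuous h) (hconv : ConvexOn ℝ Set.univ h) :
    IsClosedConvex fun z => (h z : EReal) where
  ne_bot _ := EReal.coe_ne_bot _
  lsc := (continuous_coe_real_ereal.comp hcont).lowerSemicontinuous
  convex u v t ht₀ ht₁ := mod_cast
    hconv.2 (Set.mem_univ u) (Set.mem_univ v) ht₀ (sub_nonneg.2 ht₁) (by ring)

theorem exists_sub_mul_norm_le {E : Type*} [SeminormedAddCommGroup E] [NormedSpace ℝ E]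
    {f : E → EReal} (hf : IsClosedConvex f) (hdom : (effDomain f).Nonempty) :
    ∃ a b : ℝ, ∀ u, ((a - b * ‖u‖ : ℝ) : EReal) ≤ f u := by
  obtain ⟨z, hz⟩ := hdom
  have hnhds : ∀ᶠ v in nhds z, (((f z).toReal - 1 : ℝ) : EReal) < f v := by
    refine hf.lsc z _ ?_
    exact (EReal.coe_lt_coe_iff.2 (sub_one_lt _)).trans_eq (EReal.coe_toReal hz (hf.ne_bot z))
  obtain ⟨r, hr, hball⟩ := Metric.nhds_basis_closedBall.eventually_iff.1 hnhds
  refine ⟨(f z).toReal - 1 - 1 / r * ‖z‖, 1 / r, fun u => ?_⟩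
  by_cases hu : f u = ⊤
  · simp [hu]
  rw [← EReal.coe_toReal hu (hf.ne_bot u), EReal.coe_le_coe_iff]
  have hmin := convexOn_sub_mul_norm_sub_le hf.convexOn_toReal hz hr zero_le_one
    (fun v hv hvf => EReal.toReal_le_toReal (hball hv).le (EReal.coe_ne_bot _) hvf) hu
  have := mul_le_mul_of_nonneg_left (norm_sub_le u z) (one_div_pos.2 hr).le
  linarith

end IsClosedConvex

/-- Supercoercivity, `f z / ‖z‖ → ∞` as `‖z‖ → ∞`, in a form that avoids dividing by `‖z‖`. -/
def IsSupercoercive {E : Type*} [SeminormedAddCommGroup E] (f : E → EReal) : Prop :=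
  ∀ M : ℝ, ∀ᶠ z in Bornology.cobounded E, ((M * ‖z‖ : ℝ) : EReal) ≤ f z

theorem IsSupercoercive.eventually_lt_add {E : Type*} [SeminormedAddCommGroup E] [NormedSpace ℝ E]
    {f g : E → EReal} (hf : IsSupercoercive f) (hg : IsClosedConvex g)
    (hdom : (effDomain g).Nonempty) (c : ℝ) :
    ∀ᶠ v in Bornology.cobounded E, (c : EReal) < f v + g v := by
  obtain ⟨a, b, hab⟩ := hg.exists_sub_mul_norm_le hdom
  filter_upwards [hf (b + 1), eventually_cobounded_le_norm (c - a + 1)] with v hfv hv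
  calc (c : EReal) < (((b + 1) * ‖v‖ + (a - b * ‖v‖) : ℝ) : EReal) :=
      EReal.coe_lt_coe_iff.2 (by linarith)
    _ ≤ f v + g v := by
      rw [EReal.coe_add]
      exact add_le_add hfv (hab v)

section Legendre

variable {E : Type*} [NormedAddCommGroup E] [InnerProductSpace ℝ E] [CompleteSpace E]

/-- Legendre functions: closed convex functions that are strictly convex and differentiable on the
interior of the domain, with gradient `f'` there, and essentially smooth, that is, whose gradients
blow up along sequences converging to the boundary of the domain. -/
structure IsLegendre (f : E → EReal) (f' : E → E) : Prop extends IsClosedConvex f where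
  hasGradientAt : ∀ z ∈ interior (effDomain f), HasGradientAt (fun u => (f u).toReal) (f' z) z
  strictConvexOn : StrictConvexOn ℝ (interior (effDomain f)) fun u => (f u).toReal
  essentiallySmooth : ∀ (xs : ℕ → E) (b : E), (∀ n, xs n ∈ interior (effDomain f)) →
    b ∈ frontier (effDomain f) → Tendsto xs atTop (nhds b) →
      Tendsto (fun n => ‖f' (xs n)‖) atTop atTop

namespace IsLegendre

variable {f g : E → EReal} {f' : E → E}

theorem exists_lt_norm_gradient (hf : IsLegendre f f') {z u : E}
    (hz : z ∈ interior (effDomain f)) (hu : u ∈ frontier (effDomain f)) (K : ℝ) :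
    ∃ τ : ℝ, 0 < τ ∧ τ ≤ 1 ∧ τ • z + (1 - τ) • u ∈ interior (effDomain f) ∧
      K < ‖f' (τ • z + (1 - τ) • u)‖ := by
  let τ : ℕ → ℝ := fun n => 1 / ((n : ℝ) + 1)
  have hτ₀ : ∀ n, 0 < τ n := fun n => Nat.one_div_pos_of_nat
  have hτ₁ : ∀ n, τ n ≤ 1 := fun n => (div_le_one (by positivity)).2 (by simp)
  have hτ_lim : Tendsto τ atTop (nhds 0) := tendsto_one_div_add_atTop_nhds_zero_nat
  have hint : ∀ n, τ n • z + (1 - τ n) • u ∈ interior (effDomain f) := fun n =>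
    hf.convexOn_toReal.1.combo_interior_closure_mem_interior hz (frontier_subset_closure hu)
      (hτ₀ n) (sub_nonneg.2 (hτ₁ n)) (by ring)
  have hlim : Tendsto (fun n => τ n • z + (1 - τ n) • u) atTop (nhds u) := by
    simpa using (hτ_lim.smul_const z).add ((hτ_lim.const_sub 1).smul_const u)
  obtain ⟨n, hn⟩ :=
    ((hf.essentiallySmooth _ u hint hu hlim).eventually_gt_atTop K).exists
  exact ⟨τ n, hτ₀ n, hτ₁ n, hint n, hn⟩

theorem mem_interior_of_forall_add_le (hf : IsLegendre f f') (hg : IsClosedConvex g)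
    (hdom : (interior (effDomain f) ∩ effDomain g).Nonempty) {u : E}
    (hu : ∀ v, f u + g u ≤ f v + g v) : u ∈ interior (effDomain f) ∩ effDomain g := by
  obtain ⟨z, hzf, hzg⟩ := hdom
  have hdom_add := hf.effDomain_add hg
  have hz : z ∈ effDomain fun v => f v + g v := hdom_add.superset ⟨interior_subset hzf, hzg⟩
  have hu_dom : u ∈ effDomain f ∩ effDomain g :=
    hdom_add.subset (ne_top_of_le_ne_top hz (hu z))
  refine ⟨by_contra fun hu_int => ?_, hu_dom.2⟩
  obtain ⟨r, hr, hball⟩ : ∃ r > 0, ∀ v ∈ Metric.closedBall z r,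
      v ∈ effDomain f ∧ (f v).toReal ≤ (f z).toReal + 1 :=
    Metric.nhds_basis_closedBall.eventually_iff.1 <|
      (eventually_mem_set.2 (mem_interior_iff_mem_nhds.1 hzf)).and <|
        (hf.hasGradientAt z hzf).continuousAt.eventually_le_const (lt_add_one _)
  obtain ⟨τ, hτ₀, hτ₁, hint, hlarge⟩ := hf.exists_lt_norm_gradient hzf
    ⟨subset_closure hu_dom.1, hu_int⟩
    (((f z).toReal + 1 + (g z).toReal - ((f u).toReal + (g u).toReal)) / r)
  set y := τ • z + (1 - τ) • u
  have hy_dom : y ∈ effDomain f ∩ effDomain g :=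
    ⟨interior_subset hint,
      hg.convexOn_toReal.1 hzg hu_dom.2 hτ₀.le (sub_nonneg.2 hτ₁) (by ring)⟩
  have hle : (f u).toReal + (g u).toReal ≤ (f y).toReal + (g y).toReal := by
    rw [← hf.toReal_add hg hu_dom, ← hf.toReal_add hg hy_dom]
    exact (hf.add hg).toReal_le_toReal (hdom_add.superset hy_dom) (hu y)
  have hbound := convexOn_mul_norm_gradient_le_of_add_le hf.convexOn_toReal hg.convexOn_toReal
    hu_dom.1 hu_dom.2 hzg hr.le (fun v hv => (hball v hv).1) (fun v hv => (hball v hv).2) hτ₀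
    hτ₁ (hf.hasGradientAt y hint) hle
  rw [div_lt_iff₀' hr] at hlarge
  exact hbound.not_gt hlarge

theorem strictConvexOn_toReal_add (hf : IsLegendre f f') (hg : IsClosedConvex g) :
    StrictConvexOn ℝ (interior (effDomain f) ∩ effDomain g) fun v => (f v + g v).toReal := by
  have hconv := hf.strictConvexOn.1.inter hg.convexOn_toReal.1
  refine ((hf.strictConvexOn.subset Set.inter_subset_left hconv).add_convexOn
    (hg.convexOn_toReal.subset Set.inter_subset_right hconv)).congr fun v hv => ?_
  exact (hf.toReal_add hg ⟨interior_subset hv.1, hv.2⟩).symm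

theorem exists_forall_ne_add_lt (hf : IsLegendre f f') (hf_super : IsSupercoercive f)
    (hg : IsClosedConvex g) (hdom : (interior (effDomain f) ∩ effDomain g).Nonempty) :
    ∃ u ∈ interior (effDomain f), ∀ v, v ≠ u → f u + g u < f v + g v := by
  have hfg : IsClosedConvex fun v => f v + g v := hf.add hg
  have hsub : interior (effDomain f) ∩ effDomain g ⊆ effDomain fun v => f v + g v :=
    fun v hv => (hf.effDomain_add hg).superset ⟨interior_subset hv.1, hv.2⟩
  obtain ⟨u, hu⟩ : ∃ u, ∀ v, f u + g u ≤ f v + g v := by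
    obtain ⟨z, hz⟩ := hdom
    refine exists_forall_le_of_quasiconvexOn hfg.lsc hfg.quasiconvexOn z ?_
    rw [← EReal.coe_toReal (x := f z + g z) (hsub hz) (hfg.ne_bot z)]
    exact hf_super.eventually_lt_add hg ⟨z, hz.2⟩ _
  have hmem : ∀ w, (∀ v, f w + g w ≤ f v + g v) → w ∈ interior (effDomain f) ∩ effDomain g :=
    fun w hw => hf.mem_interior_of_forall_add_le hg hdom hw
  have hmin : ∀ w, (∀ v, f w + g w ≤ f v + g v) →
      IsMinOn (fun v => (f v + g v).toReal) (interior (effDomain f) ∩ effDomain g) w :=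
    fun w hw v hv => hfg.toReal_le_toReal (hsub hv) (hw v)
  refine ⟨u, (hmem u hu).1, fun v hne => lt_of_not_ge fun hle => hne ?_⟩
  have hv : ∀ w, f v + g v ≤ f w + g w := fun w => hle.trans (hu w)
  exact (hf.strictConvexOn_toReal_add hg).eq_of_isMinOn (hmin v hv) (hmin u hu) (hmem v hv)
    (hmem u hu)

end IsLegendre

end Legendre

section BregmanDistance

variable {E : Type*} [NormedAddCommGroup E] [InnerProductSpace ℝ E]

/-- The Bregman distance `D_φ(u, x)`, where `φ'` stands for the gradient `∇φ`. -/
noncomputable def bregmanDist (φ : E → EReal) (φ' : E → E) (u x : E) : EReal :=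
  φ u - φ x - ((⟪φ' x, u - x⟫ : ℝ) : EReal)

theorem bregmanDist_eq_add_coe {φ : E → EReal} (φ' : E → E) {x : E} (hx_top : φ x ≠ ⊤)
    (hx_bot : φ x ≠ ⊥) (u : E) :
    bregmanDist φ φ' u x = φ u + ((-(φ x).toReal - ⟪φ' x, u - x⟫ : ℝ) : EReal) := by
  rw [bregmanDist, EReal.coe_sub, EReal.coe_neg, EReal.coe_toReal hx_top hx_bot]
  simp only [sub_eq_add_neg, add_assoc]

theorem isClosedConvex_const_sub_inner (c : ℝ) (p x : E) :
    IsClosedConvex fun v => ((c - ⟪p, v - x⟫ : ℝ) : EReal) := by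
  refine .of_real (by fun_prop) ⟨convex_univ, fun u _ v _ a b _ _ hab => le_of_eq ?_⟩
  obtain rfl : b = 1 - a := by linarith
  simp only [inner_sub_right, inner_add_right, real_inner_smul_right, smul_eq_mul]
  ring

theorem bregman_prox_well_defined_general [CompleteSpace E] {φ R : E → EReal} {φ' : E → E}
    (hφ : IsLegendre φ φ') (hφ_super : IsSupercoercive φ) (hR : IsClosedConvex R)
    (hdom : (interior (effDomain φ) ∩ effDomain R).Nonempty) {x : E}
    (hx : x ∈ interior (effDomain φ)) {α : ℝ} (hα : 0 < α) :
    ∃ u ∈ interior (effDomain φ), ∀ v, v ≠ u →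
      (α : EReal) * R u + bregmanDist φ φ' u x < (α : EReal) * R v + bregmanDist φ φ' v x := by
  let g : E → EReal := fun v =>
    (α : EReal) * R v + ((-(φ x).toReal - ⟪φ' x, v - x⟫ : ℝ) : EReal)
  have hg : IsClosedConvex g := (hR.coe_mul hα.le).add (isClosedConvex_const_sub_inner _ _ x)
  have hobj : ∀ v, (α : EReal) * R v + bregmanDist φ φ' v x = φ v + g v := fun v => by
    rw [bregmanDist_eq_add_coe φ' (interior_subset hx) (hφ.ne_bot x), add_left_comm]
  obtain ⟨z, hzφ, hzR⟩ := hdom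
  have hzg : g z ≠ ⊤ := by
    simp only [g]
    rw [← EReal.coe_toReal hzR (hR.ne_bot z)]
    exact_mod_cast EReal.coe_ne_top _
  simpa only [hobj] using hφ.exists_forall_ne_add_lt hφ_super hg ⟨z, hzφ, hzg⟩

end BregmanDistance

/-- well-definedness of the Bregman proximal mapping. For a Legendre kernel
`φ` (proper, lsc, convex, `int dom φ = C`, differentiable and strictly convex on `C`,
supercoercive and essentially smooth) and a proper lsc convex `R` with `dom R ∩ C ≠ ∅`,
the problem `min_{u ∈ closure C} α R(u) + D_φ(u, x)` has exactly one solution for every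
`x ∈ C`, `α > 0`, and this solution lies in `C`. -/
theorem bregman_prox_well_defined {d : ℕ}
    (C : Set (EuclideanSpace ℝ (Fin d)))
    (hCne : C.Nonempty) (hCopen : IsOpen C) (hCconv : Convex ℝ C)
    (φ : EuclideanSpace ℝ (Fin d) → EReal)
    -- φ is proper
    (hφ_ne_top : ∃ z, φ z ≠ ⊤) (hφ_ne_bot : ∀ z, φ z ≠ ⊥)
    -- φ is lower semicontinuous and convex
    (hφ_lsc : LowerSemicontinuous φ)
    (hφ_conv : ∀ u v : EuclideanSpace ℝ (Fin d), ∀ t : ℝ, 0 ≤ t → t ≤ 1 →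
      φ (t • u + (1 - t) • v) ≤ (t : EReal) * φ u + ((1 - t : ℝ) : EReal) * φ v)
    -- int dom φ = C
    (hφ_int_dom : interior {z | φ z ≠ ⊤} = C)
    -- φ is differentiable on C, with gradient φ'
    (φ' : EuclideanSpace ℝ (Fin d) → EuclideanSpace ℝ (Fin d))
    (hφ_diff : ∀ z ∈ C, HasGradientAt (fun u => (φ u).toReal) (φ' z) z)
    -- φ is strictly convex on C
    (hφ_strict : StrictConvexOn ℝ C (fun u => (φ u).toReal))
    -- φ is supercoercive: φ(z)/‖z‖ → ∞ as ‖z‖ → ∞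
    (hφ_super : ∀ M : ℝ, ∃ ρ : ℝ, ∀ z, ρ ≤ ‖z‖ → ((M * ‖z‖ : ℝ) : EReal) ≤ φ z)
    -- φ is essentially smooth
    (hφ_ess : ∀ (xs : ℕ → EuclideanSpace ℝ (Fin d)) (b : EuclideanSpace ℝ (Fin d)),
      (∀ n, xs n ∈ C) → b ∈ frontier {z | φ z ≠ ⊤} →
        Tendsto xs atTop (nhds b) → Tendsto (fun n => ‖φ' (xs n)‖) atTop atTop)
    -- R is proper, lower semicontinuous and convex with dom R ∩ C ≠ ∅
    (R : EuclideanSpace ℝ (Fin d) → EReal)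
    (hR_ne_top : ∃ z, R z ≠ ⊤) (hR_ne_bot : ∀ z, R z ≠ ⊥)
    (hR_lsc : LowerSemicontinuous R)
    (hR_conv : ∀ u v : EuclideanSpace ℝ (Fin d), ∀ t : ℝ, 0 ≤ t → t ≤ 1 →
      R (t • u + (1 - t) • v) ≤ (t : EReal) * R u + ((1 - t : ℝ) : EReal) * R v)
    (hR_dom : ∃ z ∈ C, R z ≠ ⊤)
    (x : EuclideanSpace ℝ (Fin d)) (hx : x ∈ C) (α : ℝ) (hα : 0 < α) :
    ∃ u ∈ C,
      (∀ v ∈ closure C,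
        (α : EReal) * R u + (φ u - φ x - ((⟪φ' x, u - x⟫ : ℝ) : EReal)) ≤
          (α : EReal) * R v + (φ v - φ x - ((⟪φ' x, v - x⟫ : ℝ) : EReal))) ∧
      (∀ w ∈ closure C,
        (∀ v ∈ closure C,
          (α : EReal) * R w + (φ w - φ x - ((⟪φ' x, w - x⟫ : ℝ) : EReal)) ≤
            (α : EReal) * R v + (φ v - φ x - ((⟪φ' x, v - x⟫ : ℝ) : EReal))) → w = u) := by
  subst hφ_int_dom
  have hφ : IsLegendre φ φ' := ⟨⟨hφ_ne_bot, hφ_lsc, hφ_conv⟩, hφ_diff, hφ_strict, hφ_ess⟩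
  have hφ_coercive : IsSupercoercive φ := fun M =>
    (hφ_super M).elim fun ρ hρ => (eventually_cobounded_le_norm ρ).mono hρ
  obtain ⟨u, huC, hu⟩ := bregman_prox_well_defined_general hφ hφ_coercive
    ⟨hR_ne_bot, hR_lsc, hR_conv⟩ hR_dom hx hα
  refine ⟨u, huC, fun v _ => ?_, fun w _ hw => by_contra fun hne => ?_⟩
  · rcases eq_or_ne v u with rfl | hne
    exacts [le_rfl, (hu v hne).le]
  · exact (hu w hne).not_ge (hw u (subset_closure huC))
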